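/- Let 𝔞 be a cofinite monomial ideal in k[x₁,…,x_d] and let x ∈ P(𝔞) be a point all of whose coordinates are strictly positive. Then x ∈ P(𝔞) \ int(P(𝔞)) if and only if there exists a vector a ∈ ℝ^d with all coordinates strictly positive such that ⟨a, x⟩ ≤ ⟨a, y⟩ for all y ∈ P(𝔞). Moreover, in that case ⟨a, x⟩ > 0 and the exposed face {y ∈ P(𝔞) : ⟨a, y⟩ = ⟨a, x⟩} is compact. (Geometric core of Theorem 5.2: the part of the boundary of the Newton polyhedron lying off the coordinate hyperplanes is exactly the union of its bounded faces.) -/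

import Mathlib

open Set Filter Pointwise MeasureTheory

/-- The map sending a vector of natural number exponents to the corresponding
real vector. -/
noncomputable def expToReal (d : ℕ) (v : Fin d → ℕ) : Fin d → ℝ := fun i => (v i : ℝ)

/-- The Newton polyhedron of a monomial ideal with exponent set `S`:
the convex hull in `ℝ^d` of the exponent vectors. -/
noncomputable def newtonPoly (d : ℕ) (S : Set (Fin d → ℕ)) : Set (Fin d → ℝ) :=
  convexHull ℝ (expToReal d '' S)

/-- The multiplicity `m(c)` of `c > 0` as a (candidate) jumping number of the monomial
ideal with exponent set `S`: the number of `v ∈ ℕ^d` with `v + 𝟏` on the boundary part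
`c•P(𝔞) \ int(c•P(𝔞))` of the dilated Newton polyhedron. -/
noncomputable def multJump (d : ℕ) (S : Set (Fin d → ℕ)) (c : ℝ) : ℕ :=
  Nat.card {v : Fin d → ℕ |
    expToReal d v + 1 ∈ c • newtonPoly d S \ interior (c • newtonPoly d S)}

/-!
A boundary point `x` of a convex upper set `P` has a supporting functional `a`, whose coefficients
are nonnegative because `x + eᵢ ∈ P`. If `x` has positive coordinates, then `a ⬝ᵥ x > 0`; comparing
with a point `t eᵢ` of `P` on the `i`-th axis gives `0 < a ⬝ᵥ x ≤ aᵢ t`, so `aᵢ ≠ 0`. Conversely, a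
nonzero linear functional has no local minimum. When all `aᵢ` are positive, fixing the value of `a`
on a set that is bounded below also bounds every coordinate from above, so faces are compact.

The Newton polyhedron is such a set: by Dickson's lemma it is a polytope plus the nonnegative
orthant, and cofiniteness puts a monomial of the ideal on every coordinate axis.
-/

section DotProduct

variable {ι R : Type*} [Fintype ι] [Semiring R] [PartialOrder R] [IsStrictOrderedRing R]
  {a x : ι → R}

theorem dotProduct_pos_of_pos_of_forall_pos (ha : 0 < a) (hx : ∀ i, 0 < x i) : 0 < a ⬝ᵥ x := by
  obtain ⟨ha_nonneg, i, hi⟩ := Pi.lt_def.mp ha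
  exact Finset.sum_pos' (fun j _ => mul_nonneg (ha_nonneg j) (hx j).le)
    ⟨i, Finset.mem_univ i, mul_pos hi (hx i)⟩

theorem pos_of_dotProduct_le_dotProduct_single [DecidableEq ι] (ha : 0 < a)
    (hx : ∀ i, 0 < x i) {i : ι} {t : R} (h : a ⬝ᵥ x ≤ a ⬝ᵥ Pi.single i t) : 0 < a i := by
  refine (ha.le i).lt_of_ne' fun hi => ?_
  have hpos : 0 < a i * t := by
    simpa using (dotProduct_pos_of_pos_of_forall_pos ha hx).trans_le h
  simp [hi] at hpos

end DotProduct

theorem interior_nonempty_of_isUpperSet {ι : Type*} [Finite ι] {P : Set (ι → ℝ)}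
    (hP : IsUpperSet P) (hne : P.Nonempty) : (interior P).Nonempty := by
  obtain ⟨x, hx⟩ := hne
  exact ⟨x + 1, hP.mem_interior_of_forall_lt (subset_closure hx) fun i => by simp⟩

section UpperSet

variable {ι : Type*} [Fintype ι] {P : Set (ι → ℝ)} {a x : ι → ℝ}

theorem nonneg_of_isUpperSet_of_forall_dotProduct_le (hP : IsUpperSet P) (hx : x ∈ P)
    (hmin : ∀ y ∈ P, a ⬝ᵥ x ≤ a ⬝ᵥ y) : 0 ≤ a := by
  classical
  intro i
  have hmem : x + Pi.single i 1 ∈ P :=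
    hP (le_add_of_nonneg_right (Pi.single_nonneg.mpr zero_le_one)) hx
  simpa [dotProduct_add] using hmin _ hmem

theorem exists_pos_forall_dotProduct_le_of_notMem_interior (hconv : Convex ℝ P)
    (hup : IsUpperSet P) (hx : x ∈ P) (hint : x ∉ interior P) :
    ∃ a : ι → ℝ, 0 < a ∧ ∀ y ∈ P, a ⬝ᵥ x ≤ a ⬝ᵥ y := by
  classical
  obtain ⟨f, hf, hmax⟩ := geometric_hahn_banach_of_nonempty_interior_point hconv hint
    (interior_nonempty_of_isUpperSet hup ⟨x, hx⟩)
  obtain ⟨a, ha⟩ := (dotProductEquiv ℝ ι).surjective (-f.toLinearMap)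
  have hdot (y : ι → ℝ) : a ⬝ᵥ y = -f y := congr($ha y)
  have hmin : ∀ y ∈ P, a ⬝ᵥ x ≤ a ⬝ᵥ y := fun y hy => by
    simpa only [hdot, neg_le_neg_iff] using hmax y hy
  refine ⟨a, (nonneg_of_isUpperSet_of_forall_dotProduct_le hup hx hmin).lt_of_ne' ?_, hmin⟩
  rintro rfl
  exact hf (ContinuousLinearMap.ext fun y => by simpa using hdot y)

theorem notMem_interior_of_forall_dotProduct_le (ha : a ≠ 0)
    (hmin : ∀ y ∈ P, a ⬝ᵥ x ≤ a ⬝ᵥ y) : x ∉ interior P := by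
  classical
  intro hx
  let f : StrongDual ℝ (ι → ℝ) := (dotProductEquiv ℝ ι a).toContinuousLinearMap
  have hlocal : IsLocalMin f x := by
    filter_upwards [mem_interior_iff_mem_nhds.mp hx] using hmin
  have hf : f = 0 := hlocal.hasFDerivAt_eq_zero f.hasFDerivAt
  exact ha (dotProduct_eq_zero a fun y => congr($hf y))

theorem isCompact_setOf_mem_and_dotProduct_eq (hclosed : IsClosed P) (hbdd : BddBelow P)
    (ha : ∀ i, 0 < a i) (c : ℝ) : IsCompact {y ∈ P | a ⬝ᵥ y = c} := by
  obtain ⟨b, hb⟩ := hbdd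
  refine (isCompact_Icc (a := b) (b := fun i => b i + (c - a ⬝ᵥ b) / a i)).of_isClosed_subset
    (hclosed.inter (isClosed_eq (by fun_prop) continuous_const)) ?_
  rintro y ⟨hy, rfl⟩
  refine ⟨hb hy, fun i => ?_⟩
  have hterm : a i * (y - b) i ≤ a ⬝ᵥ (y - b) :=
    Finset.single_le_sum (f := fun j => a j * (y - b) j)
      (fun j _ => mul_nonneg (ha j).le (sub_nonneg.mpr (hb hy j))) (Finset.mem_univ i)
  rw [← sub_le_iff_le_add', le_div_iff₀' (ha i), ← dotProduct_sub]
  exact hterm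

theorem boundary_off_hyperplanes_is_bounded_faces_general [DecidableEq ι] [Nonempty ι]
    (hconv : Convex ℝ P) (hup : IsUpperSet P) (hclosed : IsClosed P) (hbdd : BddBelow P)
    (haxes : ∀ i, ∃ t : ℝ, Pi.single i t ∈ P) (hx : x ∈ P) (hxpos : ∀ i, 0 < x i) :
    (x ∈ P \ interior P ↔ ∃ a : ι → ℝ, (∀ i, 0 < a i) ∧ ∀ y ∈ P, a ⬝ᵥ x ≤ a ⬝ᵥ y) ∧
    (∀ a : ι → ℝ, (∀ i, 0 < a i) → 0 < a ⬝ᵥ x ∧ IsCompact {y ∈ P | a ⬝ᵥ y = a ⬝ᵥ x}) := by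
  have pos_of_forall_pos {a : ι → ℝ} (ha : ∀ i, 0 < a i) : 0 < a := lt_of_strongLT ha
  refine ⟨⟨fun ⟨_, hint⟩ => ?_, fun ⟨a, ha, hmin⟩ => ?_⟩, fun a ha => ⟨?_, ?_⟩⟩
  · obtain ⟨a, ha, hmin⟩ := exists_pos_forall_dotProduct_le_of_notMem_interior hconv hup hx hint
    refine ⟨a, fun i => ?_, hmin⟩
    obtain ⟨t, ht⟩ := haxes i
    exact pos_of_dotProduct_le_dotProduct_single ha hxpos (hmin _ ht)
  · exact ⟨hx, notMem_interior_of_forall_dotProduct_le (pos_of_forall_pos ha).ne' hmin⟩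
  · exact dotProduct_pos_of_pos_of_forall_pos (pos_of_forall_pos ha) hxpos
  · exact isCompact_setOf_mem_and_dotProduct_eq hclosed hbdd ha _

end UpperSet

theorem isUpperSet_of_forall_add_mem {M : Type*} [Add M] [LE M] [ExistsAddOfLE M] {S : Set M}
    (hS : ∀ v ∈ S, ∀ w, v + w ∈ S) : IsUpperSet S := fun v _ hvw hv => by
  obtain ⟨w, rfl⟩ := exists_add_of_le hvw
  exact hS v hv w

theorem exists_finite_add_univ_eq_of_isUpperSet {M : Type*} [AddCommMonoid M] [PartialOrder M]
    [WellQuasiOrderedLE M] [CanonicallyOrderedAdd M] {S : Set M} (hS : IsUpperSet S) :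
    ∃ F : Set M, F.Finite ∧ F + univ = S := by
  let I : AddSemigroupIdeal M := ⟨S, fun _ _ hv => hS le_add_self hv⟩
  obtain ⟨F, hfinite, hF⟩ : I.FG := AddSemigroupIdeal.fg_of_wellQuasiOrderedLE I
  refine ⟨F, hfinite, ?_⟩
  rw [add_comm, ← AddSemigroupIdeal.coe_closure', ← hF]
  rfl

theorem convexHull_range_natCast {R : Type*} [Field R] [LinearOrder R] [IsStrictOrderedRing R]
    [Archimedean R] : convexHull R (range ((↑) : ℕ → R)) = Ici 0 := by
  refine Subset.antisymm (convexHull_min ?_ (convex_Ici 0)) fun t ht => ?_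
  · exact range_subset_iff.mpr fun n => mem_Ici.mpr n.cast_nonneg
  · obtain ⟨n, hn⟩ := exists_nat_ge t
    exact (convex_convexHull R (range ((↑) : ℕ → R))).ordConnected.out
      (subset_convexHull R _ ⟨0, Nat.cast_zero⟩) (subset_convexHull R _ ⟨n, rfl⟩) ⟨ht, hn⟩

section NewtonPolyhedron

variable {d : ℕ} {S : Set (Fin d → ℕ)}

theorem convexHull_range_expToReal (d : ℕ) : convexHull ℝ (range (expToReal d)) = Ici 0 := by
  have hrange : range (expToReal d) = univ.pi fun _ => range ((↑) : ℕ → ℝ) :=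
    range_piMap fun _ => Nat.cast
  rw [hrange, convexHull_pi, convexHull_range_natCast, pi_univ_Ici]
  rfl

theorem image_expToReal_add (A B : Set (Fin d → ℕ)) :
    expToReal d '' (A + B) = expToReal d '' A + expToReal d '' B :=
  image_add ((Nat.castAddMonoidHom ℝ).compLeft (Fin d))

theorem expToReal_single (i : Fin d) (n : ℕ) :
    expToReal d (Pi.single i n) = Pi.single i (n : ℝ) :=
  funext fun j => Pi.apply_single (fun _ => Nat.cast (R := ℝ)) (fun _ => Nat.cast_zero) i n j

theorem exists_finite_convexHull_add_Ici_eq_newtonPoly (hS : IsUpperSet S) :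
    ∃ F : Set (Fin d → ℝ), F.Finite ∧ convexHull ℝ F + Ici 0 = newtonPoly d S := by
  obtain ⟨F, hfinite, rfl⟩ := exists_finite_add_univ_eq_of_isUpperSet hS
  refine ⟨expToReal d '' F, hfinite.image _, ?_⟩
  rw [newtonPoly, image_expToReal_add, image_univ, convexHull_add, convexHull_range_expToReal]

theorem isUpperSet_newtonPoly (hS : IsUpperSet S) : IsUpperSet (newtonPoly d S) := by
  obtain ⟨F, -, hF⟩ := exists_finite_convexHull_add_Ici_eq_newtonPoly hS
  exact hF ▸ (isUpperSet_Ici 0).add_left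

theorem isClosed_newtonPoly (hS : IsUpperSet S) : IsClosed (newtonPoly d S) := by
  obtain ⟨F, hfinite, hF⟩ := exists_finite_convexHull_add_Ici_eq_newtonPoly hS
  exact hF ▸ isClosed_Ici.add_left_of_isCompact (hfinite.isCompact_convexHull ℝ)

theorem bddBelow_newtonPoly (S : Set (Fin d → ℕ)) : BddBelow (newtonPoly d S) := by
  refine BddBelow.mono (convexHull_mono (image_subset_range _ S)) ?_
  exact convexHull_range_expToReal d ▸ bddBelow_Ici

theorem exists_single_mem_newtonPoly_of_finite_compl (hcof : Sᶜ.Finite) (i : Fin d) :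
    ∃ t : ℝ, Pi.single i t ∈ newtonPoly d S := by
  obtain ⟨_, ⟨n, rfl⟩, hn⟩ :=
    (infinite_range_of_injective
      (Pi.single_injective (M := fun _ : Fin d => ℕ) i)).exists_notMem_finite hcof
  exact ⟨n, subset_convexHull ℝ _ ⟨Pi.single i n, not_notMem.mp hn, expToReal_single i n⟩⟩

end NewtonPolyhedron

/-- Geometric core of Theorem 5.2: a point of the Newton polyhedron of a cofinite monomial
ideal with all coordinates strictly positive lies on the boundary `P(𝔞) \ int(P(𝔞))` iff it
minimizes some linear functional with strictly positive coefficients over `P(𝔞)`; moreover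
for such a functional the minimal value is positive and the exposed face is compact. -/
theorem boundary_off_hyperplanes_is_bounded_faces (d : ℕ) (hd : 1 ≤ d) (k : Type*) [Field k]
    (S : Set (Fin d → ℕ)) (hS : ∀ v ∈ S, ∀ w : Fin d → ℕ, v + w ∈ S)
    (hcof : (Sᶜ : Set (Fin d → ℕ)).Finite)
    (x : Fin d → ℝ) (hx : x ∈ newtonPoly d S) (hxpos : ∀ i, 0 < x i) :
    (x ∈ newtonPoly d S \ interior (newtonPoly d S) ↔
      ∃ a : Fin d → ℝ, (∀ i, 0 < a i) ∧
        ∀ y ∈ newtonPoly d S, ∑ i, a i * x i ≤ ∑ i, a i * y i) ∧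
    (∀ a : Fin d → ℝ, (∀ i, 0 < a i) →
      (∀ y ∈ newtonPoly d S, ∑ i, a i * x i ≤ ∑ i, a i * y i) →
      x ∈ newtonPoly d S \ interior (newtonPoly d S) →
      0 < ∑ i, a i * x i ∧
        IsCompact {y ∈ newtonPoly d S | ∑ i, a i * y i = ∑ i, a i * x i}) := by
  have : Nonempty (Fin d) := ⟨⟨0, hd⟩⟩
  have hup : IsUpperSet S := isUpperSet_of_forall_add_mem hS
  have hgeneral := boundary_off_hyperplanes_is_bounded_faces_general (convex_convexHull ℝ _)
    (isUpperSet_newtonPoly hup) (isClosed_newtonPoly hup) (bddBelow_newtonPoly S)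
    (exists_single_mem_newtonPoly_of_finite_compl hcof) hx hxpos
  exact ⟨hgeneral.1, fun a ha _ _ => hgeneral.2 a ha⟩
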